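/- arXiv:1808.03764 — 8 statements merged into one kernel-verified Lean document; each statement's English description precedes it below -/
import Mathlib

section
/- For every n ≥ 0, the statistic crs is equidistributed over the three avoidance classes S_n(132), S_n(213) and S_n(321): the multisets {crs(σ) : σ ∈ S_n(132)}, {crs(σ) : σ ∈ S_n(213)} and {crs(σ) : σ ∈ S_n(321)} are equal, i.e. Σ_{σ∈S_n(132)} x^{crs(σ)} = Σ_{σ∈S_n(213)} x^{crs(σ)} = Σ_{σ∈S_n(321)} x^{crs(σ)} as polynomials in x. Moreover these are the only coincidences among patterns of length 3: the patterns 123, 231, 312 each form singleton crs-Wilf classes. -/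
open Equiv Finset

/-- Number of crossings of a permutation of `Fin n` (0-indexed version of the
classical definition on `[n] = {1,…,n}`): pairs `(i,j)` with
`i<j<σ(i)<σ(j)` or `σ(i)<σ(j)≤i<j`. -/
def crs {n : ℕ} (σ : Equiv.Perm (Fin n)) : ℕ :=
  (Finset.univ.filter (fun q : Fin n × Fin n =>
    ((q.1 : ℕ) < q.2 ∧ (q.2 : ℕ) < σ q.1 ∧ (σ q.1 : ℕ) < σ q.2) ∨
    ((σ q.1 : ℕ) < σ q.2 ∧ (σ q.2 : ℕ) ≤ q.1 ∧ (q.1 : ℕ) < q.2))).card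

/-- Number of nestings of a permutation of `Fin n`: pairs `(i,j)` with
`i<j<σ(j)<σ(i)` or `σ(j)<σ(i)≤i<j`. -/
def nes {n : ℕ} (σ : Equiv.Perm (Fin n)) : ℕ :=
  (Finset.univ.filter (fun q : Fin n × Fin n =>
    ((q.1 : ℕ) < q.2 ∧ (q.2 : ℕ) < σ q.2 ∧ (σ q.2 : ℕ) < σ q.1) ∨
    ((σ q.2 : ℕ) < σ q.1 ∧ (σ q.1 : ℕ) ≤ q.1 ∧ (q.1 : ℕ) < q.2))).card

/-- Number of fixed points. -/
def fp {n : ℕ} (σ : Equiv.Perm (Fin n)) : ℕ :=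
  (Finset.univ.filter (fun i : Fin n => σ i = i)).card

/-- Number of excedances. -/
def exc {n : ℕ} (σ : Equiv.Perm (Fin n)) : ℕ :=
  (Finset.univ.filter (fun i : Fin n => (i : ℕ) < σ i)).card

/-- Number of inversions. -/
def invStat {n : ℕ} (σ : Equiv.Perm (Fin n)) : ℕ :=
  (Finset.univ.filter (fun q : Fin n × Fin n => q.1 < q.2 ∧ σ q.2 < σ q.1)).card

/-- `σ` contains the pattern `τ`: there is a strictly increasing choice of positions
on which `σ` is order-isomorphic to `τ`. -/
def Contains {n k : ℕ} (σ : Equiv.Perm (Fin n)) (τ : Equiv.Perm (Fin k)) : Prop :=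
  ∃ f : Fin k → Fin n, StrictMono f ∧ ∀ a b : Fin k, σ (f a) < σ (f b) ↔ τ a < τ b

/-- `σ` avoids the pattern `τ`. -/
def Avoids {n k : ℕ} (σ : Equiv.Perm (Fin n)) (τ : Equiv.Perm (Fin k)) : Prop :=
  ¬ Contains σ τ

/-- The pattern 123 (as a permutation of `Fin 3`, 0-indexed). -/
def p123 : Equiv.Perm (Fin 3) := 1
/-- The pattern 132. -/
def p132 : Equiv.Perm (Fin 3) := Equiv.swap 1 2
/-- The pattern 213. -/
def p213 : Equiv.Perm (Fin 3) := Equiv.swap 0 1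
/-- The pattern 321. -/
def p321 : Equiv.Perm (Fin 3) := Equiv.swap 0 2
/-- The pattern 231. -/
def p231 : Equiv.Perm (Fin 3) := Equiv.swap 0 2 * Equiv.swap 0 1
/-- The pattern 312. -/
def p312 : Equiv.Perm (Fin 3) := Equiv.swap 0 2 * Equiv.swap 1 2

open scoped Classical in
/-- The multiset of values of `crs` over the `τ`-avoiding permutations of `Fin n`. -/
noncomputable def crsDist (n : ℕ) {k : ℕ} (τ : Equiv.Perm (Fin k)) : Multiset ℕ :=
  (Finset.univ.filter (fun σ : Equiv.Perm (Fin n) => Avoids σ τ)).val.map crs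

/-! ### Inserting a point into a permutation -/

/-- The permutation of `Fin (n + 1)` that sends `p` to `m` and is order-isomorphic to `ρ`
on the remaining positions and values. -/
def insertPoint {n : ℕ} (p m : Fin (n + 1)) (ρ : Perm (Fin n)) : Perm (Fin (n + 1)) :=
  (finSuccEquiv' p).trans ((Equiv.optionCongr ρ).trans (finSuccEquiv' m).symm)

@[simp] lemma insertPoint_self {n : ℕ} (p m : Fin (n + 1)) (ρ : Perm (Fin n)) :
    insertPoint p m ρ p = m := by
  simp [insertPoint]

@[simp] lemma insertPoint_succAbove {n : ℕ} (p m : Fin (n + 1)) (ρ : Perm (Fin n)) (i : Fin n) :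
    insertPoint p m ρ (p.succAbove i) = m.succAbove (ρ i) := by
  simp [insertPoint]

lemma insertPoint_perm_injective {n : ℕ} (p m : Fin (n + 1)) :
    Function.Injective (insertPoint p m) := by
  intro ρ ρ' h
  ext i
  have := congrArg (fun σ => σ (p.succAbove i)) h
  have h' : ρ i = ρ' i := by simpa using this
  rw [h']

/-- A permutation of `Fin (n + 1)` is determined by its value at `p` and the rest. -/
noncomputable def insertAtPosEquiv {n : ℕ} (p : Fin (n + 1)) :
    Fin (n + 1) × Perm (Fin n) ≃ Perm (Fin (n + 1)) :=
  Equiv.ofBijective (fun x => insertPoint p x.1 x.2) <| by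
    rw [Fintype.bijective_iff_injective_and_card]
    refine ⟨?_, by simp [Fintype.card_perm, Nat.factorial_succ]⟩
    rintro ⟨m, ρ⟩ ⟨m', ρ'⟩ h
    have hm : m = m' := by simpa using congrArg (fun σ => σ p) h
    subst hm
    exact Prod.ext rfl (insertPoint_perm_injective p m h)

/-- A permutation of `Fin (n + 1)` is determined by the position of the value `m` and the
rest. -/
noncomputable def insertAtValEquiv {n : ℕ} (m : Fin (n + 1)) :
    Fin (n + 1) × Perm (Fin n) ≃ Perm (Fin (n + 1)) :=
  Equiv.ofBijective (fun x => insertPoint x.1 m x.2) <| by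
    rw [Fintype.bijective_iff_injective_and_card]
    refine ⟨?_, by simp [Fintype.card_perm, Nat.factorial_succ]⟩
    rintro ⟨p, ρ⟩ ⟨p', ρ'⟩ h
    have hp : p = p' := by
      have := congrArg (fun σ => σ p') h
      simp only [insertPoint_self] at this
      rw [← insertPoint_self p m ρ] at this
      exact ((insertPoint p m ρ).injective (by simpa using this)).symm
    subst hp
    exact Prod.ext rfl (insertPoint_perm_injective p m h)

lemma sum_perm_insertAtPos {M : Type*} [AddCommMonoid M] {n : ℕ} (p : Fin (n + 1))
    (F : Perm (Fin (n + 1)) → M) : ∑ σ, F σ = ∑ m, ∑ ρ, F (insertPoint p m ρ) := by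
  rw [← (insertAtPosEquiv p).sum_comp, Fintype.sum_prod_type]
  rfl

lemma sum_perm_insertAtVal {M : Type*} [AddCommMonoid M] {n : ℕ} (m : Fin (n + 1))
    (F : Perm (Fin (n + 1)) → M) : ∑ σ, F σ = ∑ p, ∑ ρ, F (insertPoint p m ρ) := by
  rw [← (insertAtValEquiv m).sum_comp, Fintype.sum_prod_type]
  rfl

lemma val_succAbove {n : ℕ} (p : Fin (n + 1)) (i : Fin n) :
    (p.succAbove i : ℕ) = if (i : ℕ) < p then (i : ℕ) else i + 1 := by
  unfold Fin.succAbove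
  simp only [Fin.lt_def, Fin.val_castSucc]
  split_ifs <;> simp

/-! ### Crossings of labelled families of points -/

/-- The points `(i, a)` and `(j, b)` form a crossing, with `(i, a)` to the left. -/
def IsCrossing (i j a b : ℕ) : Prop :=
  (i < j ∧ j < a ∧ a < b) ∨ (a < b ∧ b ≤ i ∧ i < j)

instance (i j a b : ℕ) : Decidable (IsCrossing i j a b) := by
  unfold IsCrossing; infer_instance

/-- The number of crossings in a family of points with positions `P` and values `V`. -/
def crossSum {n : ℕ} (P V : Fin n → ℕ) : ℕ :=
  ∑ i, ∑ j, if IsCrossing (P i) (P j) (V i) (V j) then 1 else 0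

lemma isCrossing_iff (i j a b : ℕ) :
    IsCrossing i j a b ↔ (i < j ∧ j < a ∧ a < b) ∨ (a < b ∧ b ≤ i ∧ i < j) := by
  rw [IsCrossing]

lemma crs_eq_crossSum {n : ℕ} (σ : Perm (Fin n)) :
    crs σ = crossSum (fun i => (i : ℕ)) (fun i => (σ i : ℕ)) := by
  unfold crs crossSum
  rw [Finset.card_filter, Fintype.sum_prod_type]
  rfl

lemma crossSum_succAbove {n : ℕ} (P V : Fin (n + 1) → ℕ) (p : Fin (n + 1)) :
    crossSum P V = crossSum (fun i => P (p.succAbove i)) (fun i => V (p.succAbove i)) +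
      ∑ j, ((if IsCrossing (P p) (P (p.succAbove j)) (V p) (V (p.succAbove j)) then 1 else 0) +
        if IsCrossing (P (p.succAbove j)) (P p) (V (p.succAbove j)) (V p) then 1 else 0) := by
  unfold crossSum
  rw [Fin.sum_univ_succAbove _ p, Fin.sum_univ_succAbove _ p]
  simp only [Fin.sum_univ_succAbove _ p (n := n), Finset.sum_add_distrib]
  have : ¬ IsCrossing (P p) (P p) (V p) (V p) := by unfold IsCrossing; omega
  simp only [this, if_false]
  ring

lemma crs_insertPoint {n : ℕ} (p m : Fin (n + 1)) (ρ : Perm (Fin n)) :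
    crs (insertPoint p m ρ) =
      crossSum (fun i => (p.succAbove i : ℕ)) (fun i => (m.succAbove (ρ i) : ℕ)) +
      ∑ j, ((if IsCrossing p (p.succAbove j) m (m.succAbove (ρ j)) then 1 else 0) +
        if IsCrossing (p.succAbove j) p (m.succAbove (ρ j)) m then 1 else 0) := by
  rw [crs_eq_crossSum, crossSum_succAbove _ _ p]
  simp

lemma crossSum_congr {n : ℕ} {P V P' V' : Fin n → ℕ}
    (h : ∀ i j, IsCrossing (P i) (P j) (V i) (V j) ↔ IsCrossing (P' i) (P' j) (V' i) (V' j)) :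
    crossSum P V = crossSum P' V' := by
  simp only [crossSum, h]

/-- The number of crossings of `σ` with respect to the diagonal moved down by one. -/
def crsShift {n : ℕ} (σ : Perm (Fin n)) : ℕ :=
  crossSum (fun i => (i : ℕ)) (fun i => (σ i : ℕ) + 1)

lemma crs_insertPoint_zero_zero {n : ℕ} (τ : Perm (Fin n)) :
    crs (insertPoint 0 0 τ) = crs τ := by
  rw [crs_insertPoint, crs_eq_crossSum τ, Finset.sum_eq_zero, add_zero]
  · refine crossSum_congr fun i j => ?_
    simp [IsCrossing]
  · intro j _
    simp [IsCrossing]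

lemma crs_insertPoint_last_last {n : ℕ} (τ : Perm (Fin (n + 1))) :
    crs (insertPoint (Fin.last n).castSucc (Fin.last (n + 1)) τ) = crs τ := by
  rw [crs_insertPoint, crs_eq_crossSum τ, Finset.sum_eq_zero, add_zero]
  · refine crossSum_congr fun i j => ?_
    have hi := i.isLt
    have hj := j.isLt
    have hi' := (τ i).isLt
    have hj' := (τ j).isLt
    simp only [val_succAbove, isCrossing_iff, Fin.val_last, Fin.val_castSucc]
    split_ifs <;> omega
  · intro j _
    have hj := j.isLt
    have hj' := (τ j).isLt
    simp only [val_succAbove, isCrossing_iff, Fin.val_last, Fin.val_castSucc]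
    split_ifs <;> omega

lemma sum_ite_val_lt {n : ℕ} (ρ : Perm (Fin n)) {m : ℕ} (hm : m ≤ n) :
    (∑ i, if (ρ i : ℕ) < m then 1 else 0) = m := by
  rw [Equiv.sum_comp ρ (fun i : Fin n => if (i : ℕ) < m then 1 else 0), ← Finset.card_filter,
    Fin.card_filter_val_lt, min_eq_right hm]

/-- Appending the value `m` when the smaller values appear in increasing order, strictly
below the diagonal. -/
lemma crs_append_of_small_below {n : ℕ} (ρ : Perm (Fin n)) (m : Fin (n + 1))
    (hinc : ∀ i j, i < j → ρ j < ρ i → (m : ℕ) ≤ ρ i)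
    (hlow : ∀ i, (ρ i : ℕ) < m → (ρ i : ℕ) < i) :
    crs (insertPoint (Fin.last n) m ρ) = crsShift ρ + m := by
  have hm := sum_ite_val_lt ρ (Nat.lt_succ_iff.mp m.isLt)
  rw [crs_insertPoint, crsShift]
  conv_rhs => arg 2; rw [← hm]
  unfold crossSum
  rw [← Finset.sum_add_distrib, ← Finset.sum_add_distrib]
  refine Finset.sum_congr rfl fun i _ => ?_
  have hi := i.isLt
  have hinj : ∀ j, (ρ j : ℕ) = i ↔ j = ρ.symm i := fun j => by
    rw [← Fin.ext_iff, Equiv.eq_symm_apply]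
  have key : (∑ j : Fin n, if IsCrossing ((Fin.last n).succAbove i) ((Fin.last n).succAbove j)
        (m.succAbove (ρ i)) (m.succAbove (ρ j)) then 1 else 0) =
      (∑ j : Fin n, if IsCrossing i j (ρ i + 1) (ρ j + 1) then 1 else 0) +
      ∑ j : Fin n, if j = ρ.symm i then (if (ρ i : ℕ) < m ∧ (i : ℕ) < m then 1 else 0) else 0 := by
    rw [← Finset.sum_add_distrib]
    refine Finset.sum_congr rfl fun j _ => ?_
    have hj := j.isLt
    have h1 := hinc i j
    have h2 := hinc j i
    have h3 := hlow i
    have h4 := hlow j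
    have hij : (ρ i : ℕ) = ρ j → (i : ℕ) = j := fun h => by
      rw [ρ.injective (Fin.ext h)]
    simp only [← hinj, val_succAbove, isCrossing_iff, Fin.val_last, Fin.lt_def] at *
    split_ifs <;> omega
  rw [key, Finset.sum_ite_eq' Finset.univ, if_pos (Finset.mem_univ _), add_assoc]
  congr 1
  simp only [val_succAbove, isCrossing_iff, Fin.val_last]
  split_ifs <;> omega

lemma card_filter_le_val {n : ℕ} (v : Fin (n + 1)) :
    (univ.filter fun i : Fin n => (v : ℕ) ≤ i).card = v.rev := by
  have h := Finset.card_filter_add_card_filter_not (s := (univ : Finset (Fin n)))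
    (fun i : Fin n => (i : ℕ) < v)
  simp only [not_lt] at h
  rw [Fin.card_filter_val_lt, Finset.card_univ, Fintype.card_fin] at h
  have := v.isLt
  rw [Fin.val_rev]
  omega

/-- Appending the value `k` when the values that are at least `k` appear in increasing order,
strictly above the diagonal. -/
lemma crs_append_of_large_above {n : ℕ} (τ : Perm (Fin n)) (k : Fin (n + 1))
    (hinc : ∀ i j, i < j → τ j < τ i → (τ j : ℕ) < k)
    (hhigh : ∀ i, (k : ℕ) ≤ τ i → (i : ℕ) < τ i) :
    crs (insertPoint (Fin.last n) k τ) = crs τ + k.rev := by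
  rw [crs_insertPoint, crs_eq_crossSum τ, ← card_filter_le_val, Finset.card_filter]
  unfold crossSum
  rw [Finset.sum_comm, Finset.sum_comm (f := fun i j : Fin n =>
    if IsCrossing (i : ℕ) j (τ i) (τ j) then 1 else 0), ← Finset.sum_add_distrib,
    ← Finset.sum_add_distrib]
  refine Finset.sum_congr rfl fun j _ => ?_
  have hj := j.isLt
  have hinj : ∀ i, (τ i : ℕ) = j ↔ i = τ.symm j := fun i => by
    rw [← Fin.ext_iff, Equiv.eq_symm_apply]
  have key : (∑ i : Fin n, if IsCrossing ((Fin.last n).succAbove i) ((Fin.last n).succAbove j)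
        (k.succAbove (τ i)) (k.succAbove (τ j)) then 1 else 0) =
      (∑ i : Fin n, if IsCrossing i j (τ i) (τ j) then 1 else 0) +
      ∑ i : Fin n, if i = τ.symm j then (if (k : ℕ) ≤ τ j ∧ (k : ℕ) ≤ j then 1 else 0) else 0 := by
    rw [← Finset.sum_add_distrib]
    refine Finset.sum_congr rfl fun i _ => ?_
    have hi := i.isLt
    have h1 := hinc i j
    have h2 := hinc j i
    have h3 := hhigh i
    have h4 := hhigh j
    have hij : (τ i : ℕ) = τ j → (i : ℕ) = j := fun h => by
      rw [τ.injective (Fin.ext h)]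
    simp only [← hinj, val_succAbove, isCrossing_iff, Fin.val_last, Fin.lt_def] at *
    split_ifs <;> omega
  rw [key, Finset.sum_ite_eq' Finset.univ, if_pos (Finset.mem_univ _), add_assoc]
  congr 1
  simp only [val_succAbove, isCrossing_iff, Fin.val_last]
  split_ifs <;> omega

/-- If the values of `ξ` that are at least `v` occupy the first positions, then a first point
with value `v` may be exchanged for a point with value `0` placed right after these values. -/
lemma crsShift_insertPoint_zero {n : ℕ} (v : Fin (n + 1)) (ξ : Perm (Fin n))
    (hQ : ∀ i, (v : ℕ) ≤ ξ i ↔ (i : ℕ) < v.rev) :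
    crsShift (insertPoint 0 v ξ) = crs (insertPoint v.rev 0 ξ) := by
  rw [crs_insertPoint, crsShift, crossSum_succAbove _ _ 0]
  simp only [insertPoint_self, insertPoint_succAbove]
  congr 1
  · refine crossSum_congr fun i j => ?_
    have hi := hQ i
    have hj := hQ j
    have hi' := i.isLt
    have hj' := j.isLt
    have hv := v.isLt
    simp only [Fin.succAbove_zero, Fin.val_succ, val_succAbove, isCrossing_iff, Fin.val_rev] at *
    split_ifs <;> omega
  · trans ∑ j : Fin n, if (j : ℕ) < v ∧ (j : ℕ) < v.rev then 1 else 0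
    · refine Finset.sum_congr rfl fun j _ => ?_
      have hj := hQ j
      have hv := v.isLt
      simp only [Fin.succAbove_zero, Fin.val_succ, val_succAbove, isCrossing_iff, Fin.val_zero,
        Fin.val_rev] at *
      split_ifs <;> omega
    · rw [← Equiv.sum_comp ξ]
      refine Finset.sum_congr rfl fun j _ => ?_
      have hj := hQ j
      have hv := v.isLt
      simp only [Fin.succAbove_zero, Fin.val_succ, val_succAbove, isCrossing_iff, Fin.val_zero,
        Fin.val_rev] at *
      split_ifs <;> omega

/-! ### Pattern avoidance and point insertion -/

/-- No three points of `σ` form the pattern 213. -/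
def Avoids213 {n : ℕ} (σ : Perm (Fin n)) : Prop :=
  ∀ i j k, i < j → j < k → ¬ (σ j < σ i ∧ σ i < σ k)

/-- No three points of `σ` form the pattern 321. -/
def Avoids321 {n : ℕ} (σ : Perm (Fin n)) : Prop :=
  ∀ i j k, i < j → j < k → ¬ (σ k < σ j ∧ σ j < σ i)

lemma avoids213_insertPoint {n : ℕ} (p m : Fin (n + 1)) (ρ : Perm (Fin n)) :
    Avoids213 (insertPoint p m ρ) ↔ Avoids213 ρ ∧ ∀ i j : Fin n, i < j →
      ((p : ℕ) ≤ i → ¬ ((ρ i : ℕ) < m ∧ (m : ℕ) ≤ ρ j)) ∧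
      ((i : ℕ) < p → (p : ℕ) ≤ j → ¬ ((m : ℕ) ≤ ρ i ∧ ρ i < ρ j)) ∧
      ((j : ℕ) < p → ¬ (ρ j < ρ i ∧ (ρ i : ℕ) < m)) := by
  constructor
  · intro h
    refine ⟨fun i j k hij hjk => ?_, fun i j hij => ?_⟩
    · have := h _ _ _ ((Fin.succAbove_lt_succAbove_iff (p := p)).2 hij)
        ((Fin.succAbove_lt_succAbove_iff (p := p)).2 hjk)
      simpa using this
    · have h1 := h p (p.succAbove i) (p.succAbove j)
      have h2 := h (p.succAbove i) p (p.succAbove j)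
      have h3 := h (p.succAbove i) (p.succAbove j) p
      simp only [insertPoint_self, insertPoint_succAbove, Fin.lt_def, val_succAbove] at *
      split_ifs at * <;> omega
  · rintro ⟨h, hp⟩ i j k
    obtain hi | ⟨i, rfl⟩ := p.eq_self_or_eq_succAbove i <;>
    obtain hj | ⟨j, rfl⟩ := p.eq_self_or_eq_succAbove j <;>
    obtain hk | ⟨k, rfl⟩ := p.eq_self_or_eq_succAbove k <;>
    subst_vars
    all_goals try (intro h1 h2; omega)
    · have := hp j k
      simp only [insertPoint_self, insertPoint_succAbove, Fin.lt_def, val_succAbove] at *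
      split_ifs at * <;> omega
    · have := hp i k
      simp only [insertPoint_self, insertPoint_succAbove, Fin.lt_def, val_succAbove] at *
      split_ifs at * <;> omega
    · have := hp i j
      simp only [insertPoint_self, insertPoint_succAbove, Fin.lt_def, val_succAbove] at *
      split_ifs at * <;> omega
    · simpa using h i j k

lemma avoids321_insertPoint {n : ℕ} (p m : Fin (n + 1)) (ρ : Perm (Fin n)) :
    Avoids321 (insertPoint p m ρ) ↔ Avoids321 ρ ∧ ∀ i j : Fin n, i < j →
      ((p : ℕ) ≤ i → ¬ (ρ j < ρ i ∧ (ρ i : ℕ) < m)) ∧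
      ((i : ℕ) < p → (p : ℕ) ≤ j → ¬ ((ρ j : ℕ) < m ∧ (m : ℕ) ≤ ρ i)) ∧
      ((j : ℕ) < p → ¬ ((m : ℕ) ≤ ρ j ∧ ρ j < ρ i)) := by
  constructor
  · intro h
    refine ⟨fun i j k hij hjk => ?_, fun i j hij => ?_⟩
    · have := h _ _ _ ((Fin.succAbove_lt_succAbove_iff (p := p)).2 hij)
        ((Fin.succAbove_lt_succAbove_iff (p := p)).2 hjk)
      simpa using this
    · have h1 := h p (p.succAbove i) (p.succAbove j)
      have h2 := h (p.succAbove i) p (p.succAbove j)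
      have h3 := h (p.succAbove i) (p.succAbove j) p
      simp only [insertPoint_self, insertPoint_succAbove, Fin.lt_def, val_succAbove] at *
      split_ifs at * <;> omega
  · rintro ⟨h, hp⟩ i j k
    obtain hi | ⟨i, rfl⟩ := p.eq_self_or_eq_succAbove i <;>
    obtain hj | ⟨j, rfl⟩ := p.eq_self_or_eq_succAbove j <;>
    obtain hk | ⟨k, rfl⟩ := p.eq_self_or_eq_succAbove k <;>
    subst_vars
    all_goals try (intro h1 h2; omega)
    · have := hp j k
      simp only [insertPoint_self, insertPoint_succAbove, Fin.lt_def, val_succAbove] at *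
      split_ifs at * <;> omega
    · have := hp i k
      simp only [insertPoint_self, insertPoint_succAbove, Fin.lt_def, val_succAbove] at *
      split_ifs at * <;> omega
    · have := hp i j
      simp only [insertPoint_self, insertPoint_succAbove, Fin.lt_def, val_succAbove] at *
      split_ifs at * <;> omega
    · simpa using h i j k

lemma avoids213_insertPoint_zero_zero {n : ℕ} (τ : Perm (Fin n)) :
    Avoids213 (insertPoint 0 0 τ) ↔ Avoids213 τ := by
  simp [avoids213_insertPoint]

lemma avoids321_insertPoint_last_last {n : ℕ} (τ : Perm (Fin (n + 1))) :
    Avoids321 (insertPoint (Fin.last n).castSucc (Fin.last (n + 1)) τ) ↔ Avoids321 τ := by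
  rw [avoids321_insertPoint]
  refine and_iff_left fun i j hij => ?_
  have := (τ i).isLt
  have := (τ j).isLt
  simp only [Fin.val_castSucc, Fin.val_last, Fin.lt_def] at *
  omega

lemma avoids213_append {n : ℕ} (m : Fin (n + 2)) (ρ : Perm (Fin (n + 1))) :
    Avoids213 (insertPoint (Fin.last (n + 1)) m ρ) ↔
      Avoids213 ρ ∧ ∀ i j, i < j → ρ j < ρ i → (m : ℕ) ≤ ρ i := by
  rw [avoids213_insertPoint]
  refine and_congr_right fun _ => forall_congr' fun i => forall_congr' fun j => ?_
  simp only [Fin.val_last, Fin.lt_def]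
  omega

lemma avoids321_append {n : ℕ} (k : Fin (n + 2)) (τ : Perm (Fin (n + 1))) :
    Avoids321 (insertPoint (Fin.last (n + 1)) k τ) ↔
      Avoids321 τ ∧ ∀ i j, i < j → τ j < τ i → (τ j : ℕ) < k := by
  rw [avoids321_insertPoint]
  refine and_congr_right fun _ => forall_congr' fun i => forall_congr' fun j => ?_
  simp only [Fin.val_last, Fin.lt_def]
  omega

lemma avoids213_append_iff {n : ℕ} (m : Fin (n + 2)) (ρ : Perm (Fin (n + 1))) :
    Avoids213 (insertPoint (Fin.last (n + 1)) m ρ) ↔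
      Avoids213 ρ ∧ (m : ℕ) ≤ ρ (Fin.last n) + 1 := by
  rw [avoids213_append]
  refine and_congr_right fun h => ⟨fun hinc => ?_, fun hm i j hij hlt => ?_⟩
  · by_contra! hm
    have hm' := m.isLt
    obtain ⟨i, hi⟩ := ρ.surjective ⟨ρ (Fin.last n) + 1, by omega⟩
    have hne : i ≠ Fin.last n := by
      rintro rfl
      simpa using congrArg Fin.val hi
    have := hinc i (Fin.last n) (Fin.lt_last_iff_ne_last.2 hne) (by simp [hi, Fin.lt_def])
    simp only [hi] at this
    omega
  · by_contra! hmi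
    obtain rfl | hj := eq_or_ne j (Fin.last n)
    · rw [Fin.lt_def] at hlt
      omega
    · refine h i j (Fin.last n) hij (Fin.lt_last_iff_ne_last.2 hj) ⟨hlt, ?_⟩
      have : ρ i ≠ ρ (Fin.last n) := fun h' =>
        absurd (Fin.le_last j) (not_le.2 (ρ.injective h' ▸ hij))
      rw [Fin.lt_def]
      rw [Ne, Fin.ext_iff] at this
      omega

lemma avoids321_append_iff {n : ℕ} (k : Fin (n + 2)) (τ : Perm (Fin (n + 1))) :
    Avoids321 (insertPoint (Fin.last (n + 1)) k τ) ∧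
        insertPoint (Fin.last (n + 1)) k τ (Fin.last n).castSucc ≠ Fin.last (n + 1) ↔
      Avoids321 τ ∧ (τ (Fin.last n) : ℕ) < k := by
  rw [avoids321_append, and_assoc]
  have hval : insertPoint (Fin.last (n + 1)) k τ (Fin.last n).castSucc =
      k.succAbove (τ (Fin.last n)) := by
    rw [← Fin.succAbove_last, insertPoint_succAbove]
  have hk := k.isLt
  have hlast := (τ (Fin.last n)).isLt
  rw [hval, Ne, Fin.ext_iff, val_succAbove, Fin.val_last]
  refine and_congr_right fun h => ⟨fun ⟨hinc, hne⟩ => ?_, fun hlt => ⟨fun i j hij hji => ?_, ?_⟩⟩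
  · by_contra! hle
    rw [if_neg (by omega)] at hne
    obtain ⟨i, hi⟩ := τ.surjective (Fin.last n)
    have hne' : i ≠ Fin.last n := by
      rintro rfl
      rw [hi] at hne
      simp at hne
    have := hinc i (Fin.last n) (Fin.lt_last_iff_ne_last.2 hne') (by
      rw [hi, Fin.lt_def, Fin.val_last]; omega)
    omega
  · by_contra! hkj
    refine h i j (Fin.last n) hij (Fin.lt_last_iff_ne_last.2 ?_) ⟨?_, hji⟩
    · rintro rfl
      omega
    · rw [Fin.lt_def]
      omega
  · rw [if_pos hlt]
    omega

/-- An initial segment of `Fin n` is determined by its cardinality. -/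
lemma iff_lt_card_of_antitone {n : ℕ} (S : Fin n → Prop) [DecidablePred S]
    (hS : ∀ i j, i < j → S j → S i) (i : Fin n) :
    S i ↔ (i : ℕ) < (univ.filter S).card := by
  constructor
  · intro hi
    have : Finset.Iic i ⊆ univ.filter S := fun j hj => by
      rw [Finset.mem_Iic] at hj
      obtain rfl | hlt := hj.eq_or_lt
      · simpa using hi
      · simpa using hS j i hlt hi
    simpa using Finset.card_le_card this
  · intro hlt
    by_contra hi
    have : univ.filter S ⊆ Finset.Iio i := fun j hj => by
      rw [Finset.mem_Iio]
      by_contra! hij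
      obtain rfl | hlt := hij.eq_or_lt
      · simp_all
      · exact hi (hS i j hlt (by simpa using hj))
    have := Finset.card_le_card this
    rw [Fin.card_Iio] at this
    omega

lemma avoids213_insertPoint_zero_iff {n : ℕ} (v : Fin (n + 1)) (ξ : Perm (Fin n)) :
    Avoids213 (insertPoint 0 v ξ) ↔
      Avoids213 ξ ∧ ∀ i, (v : ℕ) ≤ ξ i ↔ (i : ℕ) < v.rev := by
  rw [avoids213_insertPoint]
  refine and_congr_right fun _ => ⟨fun h i => ?_, fun h i j hij => ?_⟩
  · have hcard : (univ.filter fun i : Fin n => (v : ℕ) ≤ ξ i).card = v.rev := by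
      rw [Finset.card_filter, Equiv.sum_comp ξ (fun i : Fin n => if (v : ℕ) ≤ i then 1 else 0),
        ← Finset.card_filter, card_filter_le_val]
    rw [← hcard]
    refine iff_lt_card_of_antitone (fun i => (v : ℕ) ≤ ξ i) (fun i j hij hj => ?_) i
    have := (h i j hij).1 (Nat.zero_le _)
    omega
  · have := h i
    have := h j
    simp only [Fin.val_zero, Fin.lt_def] at *
    omega

lemma avoids213_insertPoint_rev_iff {n : ℕ} (v : Fin (n + 1)) (ξ : Perm (Fin n)) :
    Avoids213 (insertPoint v.rev 0 ξ) ↔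
      Avoids213 ξ ∧ ∀ i, (v : ℕ) ≤ ξ i ↔ (i : ℕ) < v.rev := by
  rw [avoids213_insertPoint]
  refine and_congr_right fun _ => ⟨fun h i => ?_, fun h i j hij => ?_⟩
  · have hcard : (univ.filter fun x : Fin n => (v.rev : ℕ) ≤ ξ.symm x).card = v := by
      rw [Finset.card_filter,
        Equiv.sum_comp ξ.symm (fun i : Fin n => if (v.rev : ℕ) ≤ i then 1 else 0),
        ← Finset.card_filter, card_filter_le_val, Fin.rev_rev]
    have := iff_lt_card_of_antitone (fun x => (v.rev : ℕ) ≤ ξ.symm x) (fun x y hxy hy => ?_) (ξ i)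
    · rw [hcard, ξ.symm_apply_apply] at this
      omega
    · have := (h (ξ.symm x) (ξ.symm y))
      simp only [Equiv.apply_symm_apply, Fin.val_zero, Fin.lt_def] at *
      omega
  · have := h i
    have := h j
    simp only [Fin.val_zero, Fin.lt_def] at *
    omega

/-! ### The common generating tree -/

lemma lt_apply_of_increasing {n : ℕ} {τ : Perm (Fin (n + 1))} {k : ℕ}
    (hinc : ∀ i j, i < j → τ j < τ i → (τ j : ℕ) < k) (hlast : (τ (Fin.last n) : ℕ) < k)
    (i : Fin (n + 1)) (hi : k ≤ τ i) : (i : ℕ) < τ i := by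
  have hmap : (Finset.Ioi (τ i)).map τ.symm.toEmbedding ⊆ Finset.Ioo i (Fin.last n) := by
    intro j hj
    rw [Finset.mem_map_equiv, Equiv.symm_symm, Finset.mem_Ioi] at hj
    rw [Finset.mem_Ioo, Fin.lt_last_iff_ne_last]
    refine ⟨?_, ?_⟩
    · by_contra! hji
      obtain rfl | hlt := hji.eq_or_lt
      · exact lt_irrefl _ hj
      · have := hinc j i hlt hj
        omega
    · rintro rfl
      rw [Fin.lt_def] at hj
      omega
  have hcard := Finset.card_le_card hmap
  have hne : i ≠ Fin.last n := by
    rintro rfl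
    omega
  have := Fin.lt_last_iff_ne_last.2 hne
  rw [Finset.card_map, Fin.card_Ioi, Fin.card_Ioo] at hcard
  rw [Fin.lt_def, Fin.val_last] at *
  have := (τ i).isLt
  omega

lemma apply_lt_of_increasing {n : ℕ} {ρ : Perm (Fin (n + 1))} {m : ℕ}
    (hinc : ∀ i j, i < j → ρ j < ρ i → m ≤ ρ i) (hzero : m ≤ ρ 0)
    (i : Fin (n + 1)) (hi : (ρ i : ℕ) < m) : (ρ i : ℕ) < i := by
  have hmap : (Finset.Iio (ρ i)).map ρ.symm.toEmbedding ⊆ Finset.Ioo 0 i := by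
    intro j hj
    rw [Finset.mem_map_equiv, Equiv.symm_symm, Finset.mem_Iio] at hj
    rw [Finset.mem_Ioo, Fin.pos_iff_ne_zero]
    refine ⟨?_, ?_⟩
    · rintro rfl
      rw [Fin.lt_def] at hj
      omega
    · by_contra! hij
      obtain rfl | hlt := hij.eq_or_lt
      · exact lt_irrefl _ hj
      · have := hinc i j hlt hj
        omega
  have hcard := Finset.card_le_card hmap
  have hne : i ≠ 0 := by
    rintro rfl
    omega
  have := Fin.pos_iff_ne_zero.2 hne
  rw [Finset.card_map, Fin.card_Iio, Fin.card_Ioo] at hcard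
  rw [Fin.lt_def, Fin.val_zero] at *
  omega

lemma crs_append_of_avoids321 {n : ℕ} {k : Fin (n + 2)} {τ : Perm (Fin (n + 1))}
    (h : Avoids321 τ ∧ (τ (Fin.last n) : ℕ) < k) :
    crs (insertPoint (Fin.last (n + 1)) k τ) = crs τ + k.rev := by
  have hinc := ((avoids321_append k τ).1 ((avoids321_append_iff k τ).2 h).1).2
  exact crs_append_of_large_above τ k hinc (lt_apply_of_increasing hinc h.2)

lemma insertPoint_last_apply_zero {n : ℕ} (m : Fin (n + 2)) (ρ : Perm (Fin (n + 1))) :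
    insertPoint (Fin.last (n + 1)) m ρ 0 = m.succAbove (ρ 0) := by
  rw [← insertPoint_succAbove (Fin.last (n + 1)), Fin.succAbove_last, Fin.castSucc_zero]

lemma crs_append_of_avoids213 {n : ℕ} {m : Fin (n + 2)} {ρ : Perm (Fin (n + 1))}
    (h : Avoids213 (insertPoint (Fin.last (n + 1)) m ρ))
    (h0 : insertPoint (Fin.last (n + 1)) m ρ 0 ≠ 0) :
    crs (insertPoint (Fin.last (n + 1)) m ρ) = crsShift ρ + m := by
  have hinc := ((avoids213_append m ρ).1 h).2
  refine crs_append_of_small_below ρ m hinc (apply_lt_of_increasing hinc ?_)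
  by_contra! hlt
  have hne : ρ 0 ≠ 0 := by
    intro h'
    rw [insertPoint_last_apply_zero, Ne, Fin.ext_iff, val_succAbove, if_pos hlt, h'] at h0
    exact h0 rfl
  obtain ⟨i, hi⟩ := ρ.surjective 0
  have hi0 : i ≠ 0 := by
    rintro rfl
    exact hne hi
  have := hinc 0 i (Fin.pos_iff_ne_zero.2 hi0) (by rw [hi]; exact Fin.pos_iff_ne_zero.2 hne)
  omega

lemma avoids213_rotate_iff {n : ℕ} (m : Fin (n + 2)) (v : Fin (n + 1)) (ξ : Perm (Fin n)) :
    Avoids213 (insertPoint (Fin.last (n + 1)) m (insertPoint 0 v ξ)) ∧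
        insertPoint (Fin.last (n + 1)) m (insertPoint 0 v ξ) 0 ≠ 0 ↔
      Avoids213 (insertPoint v.rev 0 ξ) ∧ (m : ℕ) ≤ insertPoint v.rev 0 ξ (Fin.last n) := by
  rw [insertPoint_last_apply_zero, insertPoint_self, avoids213_append_iff,
    avoids213_insertPoint_zero_iff, avoids213_insertPoint_rev_iff, and_assoc]
  refine and_congr_right fun ⟨_, hQ⟩ => ?_
  rw [Ne, Fin.ext_iff, val_succAbove, Fin.val_zero]
  obtain hv | hv := eq_or_ne v 0
  · have : insertPoint v.rev 0 ξ (Fin.last n) = 0 := by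
      rw [hv, Fin.rev_zero, insertPoint_self]
    rw [Fin.ext_iff, Fin.val_zero] at hv
    rw [this, Fin.val_zero]
    split <;> omega
  · obtain ⟨n, rfl⟩ : ∃ n', n = n' + 1 :=
      Nat.exists_eq_succ_of_ne_zero (by rintro rfl; exact hv (Fin.ext (by omega)))
    rw [Ne, Fin.ext_iff, Fin.val_zero] at hv
    have hne : ¬ (if (v : ℕ) < m then (v : ℕ) else (v : ℕ) + 1) = 0 := by
      split <;> omega
    have hlt : (ξ (Fin.last n) : ℕ) < v := by
      have := hQ (Fin.last n)
      rw [Fin.val_rev, Fin.val_last] at this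
      omega
    have h1 : v.rev.succAbove (Fin.last n) = Fin.last (n + 1) := by
      rw [Fin.ext_iff, val_succAbove, Fin.val_rev, Fin.val_last, Fin.val_last]
      split_ifs <;> omega
    have h2 : (0 : Fin (n + 2)).succAbove (Fin.last n) = Fin.last (n + 1) := by simp
    rw [and_iff_left hne, ← h2, insertPoint_succAbove, h2, ← h1, insertPoint_succAbove,
      val_succAbove, if_pos hlt, Fin.succAbove_zero, Fin.val_succ]

open scoped Classical in
lemma sum_avoids213_succ {M : Type*} [AddCommMonoid M] (n : ℕ) (f : ℕ → ℕ → M) :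
    (∑ σ : Perm (Fin (n + 2)), if Avoids213 σ then f (σ (Fin.last _)) (crs σ) else 0) =
      ∑ τ : Perm (Fin (n + 1)), if Avoids213 τ then
        f (τ (Fin.last n) + 1) (crs τ) + ∑ m : Fin (n + 2),
          (if (m : ℕ) ≤ τ (Fin.last n) then f m (crs τ + m) else 0) else 0 := by
  have hsplit : ∀ σ : Perm (Fin (n + 2)),
      (if Avoids213 σ then f (σ (Fin.last _)) (crs σ) else 0) =
        (if σ 0 = 0 then (if Avoids213 σ then f (σ (Fin.last _)) (crs σ) else 0) else 0) +
        if Avoids213 σ ∧ σ 0 ≠ 0 then f (σ (Fin.last _)) (crs σ) else 0 := by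
    intro σ
    by_cases h : σ 0 = 0 <;> simp [h]
  have hsplit' : ∀ τ : Perm (Fin (n + 1)), (if Avoids213 τ then
        f (τ (Fin.last n) + 1) (crs τ) + ∑ m : Fin (n + 2),
          (if (m : ℕ) ≤ τ (Fin.last n) then f m (crs τ + m) else 0) else 0) =
      (if Avoids213 τ then f (τ (Fin.last n) + 1) (crs τ) else 0) +
      ∑ m : Fin (n + 2),
        if Avoids213 τ ∧ (m : ℕ) ≤ τ (Fin.last n) then f m (crs τ + m) else 0 := by
    intro τ
    by_cases h : Avoids213 τ <;> simp [h]
  rw [Finset.sum_congr rfl fun σ _ => hsplit σ, Finset.sum_congr rfl fun τ _ => hsplit' τ,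
    Finset.sum_add_distrib, Finset.sum_add_distrib]
  congr 1
  · rw [sum_perm_insertAtPos 0, Finset.sum_eq_single 0]
    · refine Finset.sum_congr rfl fun τ _ => ?_
      have hlast : insertPoint 0 0 τ (Fin.last (n + 1)) = (τ (Fin.last n)).succ := by
        rw [← Fin.succ_last, ← Fin.succAbove_zero, insertPoint_succAbove]
      rw [if_pos (insertPoint_self 0 0 τ), avoids213_insertPoint_zero_zero,
        crs_insertPoint_zero_zero, hlast, Fin.val_succ]
    · intro m _ hm
      simp [hm]
    · simp
  · rw [sum_perm_insertAtPos (Fin.last _),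
      Finset.sum_comm (s := (univ : Finset (Perm (Fin (n + 1)))))]
    refine Finset.sum_congr rfl fun m _ => ?_
    rw [sum_perm_insertAtPos 0]
    conv_rhs => rw [sum_perm_insertAtVal 0, ← Equiv.sum_comp Fin.revPerm]
    refine Finset.sum_congr rfl fun v _ => Finset.sum_congr rfl fun ξ _ => ?_
    rw [Fin.revPerm_apply]
    refine ite_congr (propext (avoids213_rotate_iff m v ξ)) (fun h => ?_) fun _ => rfl
    obtain ⟨hav, h0⟩ := (avoids213_rotate_iff m v ξ).2 h
    rw [crs_append_of_avoids213 hav h0, insertPoint_self,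
      crsShift_insertPoint_zero v ξ ((avoids213_insertPoint_rev_iff v ξ).1 h.1).2]

open scoped Classical in
lemma sum_avoids321_succ {M : Type*} [AddCommMonoid M] (n : ℕ) (f : ℕ → ℕ → M) :
    (∑ σ : Perm (Fin (n + 2)), if Avoids321 σ then f (σ (Fin.last _)).rev (crs σ) else 0) =
      ∑ τ : Perm (Fin (n + 1)), if Avoids321 τ then
        f ((τ (Fin.last n)).rev + 1) (crs τ) + ∑ m : Fin (n + 2),
          (if (m : ℕ) ≤ (τ (Fin.last n)).rev then f m (crs τ + m) else 0) else 0 := by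
  have hsplit : ∀ σ : Perm (Fin (n + 2)),
      (if Avoids321 σ then f (σ (Fin.last _)).rev (crs σ) else 0) =
        (if σ (Fin.last n).castSucc = Fin.last (n + 1) then
          (if Avoids321 σ then f (σ (Fin.last _)).rev (crs σ) else 0) else 0) +
        if Avoids321 σ ∧ σ (Fin.last n).castSucc ≠ Fin.last (n + 1) then
          f (σ (Fin.last _)).rev (crs σ) else 0 := by
    intro σ
    by_cases h : σ (Fin.last n).castSucc = Fin.last (n + 1) <;> simp [h]
  have hsplit' : ∀ τ : Perm (Fin (n + 1)), (if Avoids321 τ then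
        f ((τ (Fin.last n)).rev + 1) (crs τ) + ∑ m : Fin (n + 2),
          (if (m : ℕ) ≤ (τ (Fin.last n)).rev then f m (crs τ + m) else 0) else 0) =
      (if Avoids321 τ then f ((τ (Fin.last n)).rev + 1) (crs τ) else 0) +
      ∑ m : Fin (n + 2),
        if Avoids321 τ ∧ (m : ℕ) ≤ (τ (Fin.last n)).rev then f m (crs τ + m) else 0 := by
    intro τ
    by_cases h : Avoids321 τ <;> simp [h]
  rw [Finset.sum_congr rfl fun σ _ => hsplit σ, Finset.sum_congr rfl fun τ _ => hsplit' τ,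
    Finset.sum_add_distrib, Finset.sum_add_distrib]
  congr 1
  · rw [sum_perm_insertAtPos (Fin.last n).castSucc, Finset.sum_eq_single (Fin.last (n + 1))]
    · refine Finset.sum_congr rfl fun τ _ => ?_
      have hlast : insertPoint (Fin.last n).castSucc (Fin.last (n + 1)) τ (Fin.last (n + 1)) =
          (τ (Fin.last n)).castSucc := by
        have : (Fin.last n).castSucc.succAbove (Fin.last n) = Fin.last (n + 1) := by simp
        rw [← this, insertPoint_succAbove, this, Fin.succAbove_last]
      rw [if_pos (insertPoint_self _ _ τ), avoids321_insertPoint_last_last,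
        crs_insertPoint_last_last, hlast, Fin.rev_castSucc, Fin.val_succ]
    · intro m _ hm
      simp [hm]
    · simp
  · rw [sum_perm_insertAtPos (Fin.last _),
      Finset.sum_comm (s := (univ : Finset (Perm (Fin (n + 1))))),
      ← Equiv.sum_comp Fin.revPerm]
    refine Finset.sum_congr rfl fun m _ => Finset.sum_congr rfl fun τ _ => ?_
    rw [Fin.revPerm_apply, insertPoint_self, Fin.rev_rev]
    have hiff : ((τ (Fin.last n) : ℕ) < m.rev) ↔ (m : ℕ) ≤ (τ (Fin.last n)).rev := by
      have := m.isLt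
      have := (τ (Fin.last n)).isLt
      rw [Fin.val_rev, Fin.val_rev]
      omega
    refine ite_congr (propext ((avoids321_append_iff _ τ).trans (by rw [hiff])))
      (fun h => ?_) fun _ => rfl
    rw [← hiff] at h
    rw [crs_append_of_avoids321 h, Fin.rev_rev]

open scoped Classical in
/-- The last value and the number of crossings have the same joint distribution on the two
classes, once the values are reversed in the second one. -/
lemma sum_avoids213_eq_sum_avoids321 {M : Type*} [AddCommMonoid M] (n : ℕ) (f : ℕ → ℕ → M) :
    (∑ σ : Perm (Fin (n + 1)), if Avoids213 σ then f (σ (Fin.last n)) (crs σ) else 0) =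
      ∑ σ : Perm (Fin (n + 1)), if Avoids321 σ then f (σ (Fin.last n)).rev (crs σ) else 0 := by
  induction n generalizing f with
  | zero =>
    refine Finset.sum_congr rfl fun σ _ => ?_
    have h213 : Avoids213 σ := fun i j _ hij => by omega
    have h321 : Avoids321 σ := fun i j _ hij => by omega
    rw [if_pos h213, if_pos h321,
      show (σ (Fin.last 0)).rev = σ (Fin.last 0) from Fin.ext (by omega)]
  | succ n ih =>
    rw [sum_avoids213_succ, sum_avoids321_succ]
    exact ih fun a c => f (a + 1) c + ∑ m : Fin (n + 2), if (m : ℕ) ≤ a then f m (c + m) else 0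

/-! ### Patterns of length three -/

/-- The points of `σ` at the positions `i`, `j`, `k` are order-isomorphic to `τ`. -/
def IsOccurrence {n : ℕ} (σ : Perm (Fin n)) (τ : Perm (Fin 3)) (i j k : Fin n) : Prop :=
  ∀ a b, σ (![i, j, k] a) < σ (![i, j, k] b) ↔ τ a < τ b

instance {n : ℕ} (σ : Perm (Fin n)) (τ : Perm (Fin 3)) (i j k : Fin n) :
    Decidable (IsOccurrence σ τ i j k) := by
  unfold IsOccurrence; infer_instance

lemma avoids_iff {n : ℕ} (σ : Perm (Fin n)) (τ : Perm (Fin 3)) :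
    Avoids σ τ ↔ ∀ i j k, i < j → j < k → ¬ IsOccurrence σ τ i j k := by
  constructor
  · intro h i j k hij hjk hocc
    refine h ⟨![i, j, k], ?_, hocc⟩
    rw [Fin.strictMono_iff_lt_succ]
    intro a
    fin_cases a
    · exact hij
    · exact hjk
  · rintro h ⟨f, hf, hocc⟩
    refine h (f 0) (f 1) (f 2) (hf (by decide)) (hf (by decide)) ?_
    have : ![f 0, f 1, f 2] = f := by
      ext a
      fin_cases a <;> rfl
    rw [IsOccurrence, this]
    exact hocc

lemma avoids_p213_iff {n : ℕ} (σ : Perm (Fin n)) : Avoids σ p213 ↔ Avoids213 σ := by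
  rw [avoids_iff, Avoids213]
  refine forall₃_congr fun i j k => imp_congr_right fun _ => imp_congr_right fun _ => not_congr ?_
  simp only [IsOccurrence, Fin.forall_fin_succ, p213]
  simp [Equiv.swap_apply_def]
  omega

lemma avoids_p321_iff {n : ℕ} (σ : Perm (Fin n)) : Avoids σ p321 ↔ Avoids321 σ := by
  rw [avoids_iff, Avoids321]
  refine forall₃_congr fun i j k => imp_congr_right fun _ => imp_congr_right fun _ => not_congr ?_
  simp only [IsOccurrence, Fin.forall_fin_succ, p321]
  simp [Equiv.swap_apply_def]
  omega

lemma avoids_p132_iff {n : ℕ} (σ : Perm (Fin n)) :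
    Avoids σ p132 ↔ ∀ i j k, i < j → j < k → ¬ (σ i < σ k ∧ σ k < σ j) := by
  rw [avoids_iff]
  refine forall₃_congr fun i j k => imp_congr_right fun _ => imp_congr_right fun _ => not_congr ?_
  simp only [IsOccurrence, Fin.forall_fin_succ, p132]
  simp [Equiv.swap_apply_def]
  omega

/-! ### Reflection in the antidiagonal -/

/-- The reflection of a permutation in the antidiagonal. -/
def antiReflect {n : ℕ} (σ : Perm (Fin n)) : Perm (Fin n) :=
  Fin.revPerm * σ⁻¹ * Fin.revPerm

lemma antiReflect_rev_apply {n : ℕ} (σ : Perm (Fin n)) (i : Fin n) :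
    antiReflect σ (σ i).rev = i.rev := by
  simp [antiReflect]

lemma antiReflect_involutive {n : ℕ} :
    Function.Involutive (antiReflect : Perm (Fin n) → Perm (Fin n)) := by
  intro σ
  ext i
  simp [antiReflect, Equiv.Perm.inv_def, Equiv.Perm.mul_def]

lemma crs_antiReflect {n : ℕ} (σ : Perm (Fin n)) : crs (antiReflect σ) = crs σ := by
  rw [crs_eq_crossSum, crs_eq_crossSum]
  unfold crossSum
  rw [Finset.sum_comm, ← Equiv.sum_comp (σ.trans Fin.revPerm)]
  refine Finset.sum_congr rfl fun i _ => ?_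
  rw [← Equiv.sum_comp (σ.trans Fin.revPerm)]
  refine Finset.sum_congr rfl fun j _ => ?_
  have hi := i.isLt
  have hj := j.isLt
  have hi' := (σ i).isLt
  have hj' := (σ j).isLt
  simp only [Equiv.trans_apply, Fin.revPerm_apply, antiReflect_rev_apply, isCrossing_iff,
    Fin.val_rev]
  split_ifs <;> omega

lemma avoids213_antiReflect {n : ℕ} (σ : Perm (Fin n)) :
    Avoids213 (antiReflect σ) ↔ Avoids σ p132 := by
  rw [avoids_p132_iff]
  constructor
  · intro h i j k hij hjk hocc
    refine h (σ j).rev (σ k).rev (σ i).rev ?_ ?_ ?_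
    all_goals simp only [antiReflect_rev_apply, Fin.rev_lt_rev]
    · exact hocc.2
    · exact hocc.1
    · exact ⟨hjk, hij⟩
  · intro h x y z hxy hyz hocc
    obtain ⟨i, rfl⟩ := (σ.trans Fin.revPerm).surjective x
    obtain ⟨j, rfl⟩ := (σ.trans Fin.revPerm).surjective y
    obtain ⟨k, rfl⟩ := (σ.trans Fin.revPerm).surjective z
    simp only [Equiv.trans_apply, Fin.revPerm_apply, antiReflect_rev_apply, Fin.rev_lt_rev] at *
    exact h k i j hocc.2 hocc.1 ⟨hyz, hxy⟩

/-! ### Distributions -/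

open scoped Classical in
lemma crsDist_eq_sum (n : ℕ) {k : ℕ} (τ : Perm (Fin k)) :
    crsDist n τ = ∑ σ : Perm (Fin n), if Avoids σ τ then {crs σ} else 0 := by
  rw [← Finset.sum_filter, crsDist, Finset.sum, ← Multiset.sum_map_singleton (Multiset.map _ _),
    Multiset.map_map]
  rfl

open scoped Classical in
lemma crsDist_p132_eq_p213 (n : ℕ) : crsDist n p132 = crsDist n p213 := by
  rw [crsDist_eq_sum, crsDist_eq_sum, ← Equiv.sum_comp antiReflect_involutive.toPerm]
  refine Finset.sum_congr rfl fun σ _ => ?_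
  rw [Function.Involutive.coe_toPerm, crs_antiReflect]
  refine if_congr ?_ rfl rfl
  rw [← avoids213_antiReflect, antiReflect_involutive, avoids_p213_iff]

open scoped Classical in
lemma crsDist_p213_eq_p321 (n : ℕ) : crsDist n p213 = crsDist n p321 := by
  rw [crsDist_eq_sum, crsDist_eq_sum,
    Finset.sum_congr rfl fun σ _ => if_congr (avoids_p213_iff σ) rfl rfl,
    Finset.sum_congr rfl fun σ _ => if_congr (avoids_p321_iff σ) rfl rfl]
  cases n with
  | zero =>
    refine Finset.sum_congr rfl fun σ _ => ?_
    have h213 : Avoids213 σ := fun i => i.elim0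
    have h321 : Avoids321 σ := fun i => i.elim0
    rw [if_pos h213, if_pos h321]
  | succ n => exact sum_avoids213_eq_sum_avoids321 n fun _ c => ({c} : Multiset ℕ)

lemma crsDist_eq_map_filter (n : ℕ) (τ : Perm (Fin 3)) :
    crsDist n τ = (univ.filter fun σ : Perm (Fin n) =>
      ∀ i j k, i < j → j < k → ¬ IsOccurrence σ τ i j k).val.map crs := by
  simp only [crsDist, avoids_iff]

lemma crsDist_four_ne (τ τ' : Perm (Fin 3)) (hτ : τ = p123 ∨ τ = p231 ∨ τ = p312) (hne : τ' ≠ τ) :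
    crsDist 4 τ ≠ crsDist 4 τ' := by
  rw [crsDist_eq_map_filter, crsDist_eq_map_filter]
  revert τ τ'
  decide +kernel

/-- `crs` is equidistributed over `S_n(132)`, `S_n(213)` and `S_n(321)` for every `n`,
and the patterns 123, 231 and 312 form singleton `crs`-Wilf classes among the
patterns of length 3. -/
theorem crs_wilf_classes :
    (∀ n : ℕ, crsDist n p132 = crsDist n p213 ∧ crsDist n p132 = crsDist n p321) ∧
    (∀ τ ∈ ({p123, p231, p312} : Set (Equiv.Perm (Fin 3))),
      ∀ τ' : Equiv.Perm (Fin 3), τ' ≠ τ → ∃ n : ℕ, crsDist n τ ≠ crsDist n τ') := by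
  refine ⟨fun n => ⟨crsDist_p132_eq_p213 n,
    (crsDist_p132_eq_p213 n).trans (crsDist_p213_eq_p321 n)⟩, fun τ hτ τ' hne => ⟨4, ?_⟩⟩
  exact crsDist_four_ne τ τ' (by simpa using hτ) hne
end

section
/- For every n ≥ 0, the statistic nes is equidistributed over S_n(132) and S_n(213), and also equidistributed over S_n(231) and S_n(312): Σ_{σ∈S_n(132)} x^{nes(σ)} = Σ_{σ∈S_n(213)} x^{nes(σ)} and Σ_{σ∈S_n(231)} x^{nes(σ)} = Σ_{σ∈S_n(312)} x^{nes(σ)} as polynomials in x. Moreover the patterns 123 and 321 each form singleton nes-Wilf classes among patterns of length 3. -/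
open Equiv Finset

open scoped Classical in
/-- The multiset of values of `nes` over the `τ`-avoiding permutations of `Fin n`. -/
noncomputable def nesDist (n : ℕ) {k : ℕ} (τ : Equiv.Perm (Fin k)) : Multiset ℕ :=
  (Finset.univ.filter (fun σ : Equiv.Perm (Fin n) => Avoids σ τ)).val.map nes

section ReverseComplement

variable {n : ℕ}

/-- The reverse-complement of a permutation, as an involution of `Perm (Fin n)`. -/
def revComp : Equiv.Perm (Fin n) ≃ Equiv.Perm (Fin n) := Fin.revPerm.permCongr

theorem revComp_apply (σ : Equiv.Perm (Fin n)) (i : Fin n) :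
    revComp σ i = (σ i.rev).rev := by
  simp [revComp]

theorem revComp_revComp (σ : Equiv.Perm (Fin n)) : revComp (revComp σ) = σ := by
  ext i
  simp [revComp_apply]

theorem Contains.revComp {k : ℕ} {σ : Equiv.Perm (Fin n)} {τ : Equiv.Perm (Fin k)}
    (h : Contains σ τ) : Contains (revComp σ) (revComp τ) := by
  obtain ⟨f, hf, hστ⟩ := h
  refine ⟨fun a => (f a.rev).rev, fun a b hab => ?_, fun a b => ?_⟩
  · exact Fin.rev_lt_rev.2 (hf (Fin.rev_lt_rev.2 hab))
  · simp [revComp_apply, hστ]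

theorem avoids_revComp_iff {k : ℕ} {σ : Equiv.Perm (Fin n)} {τ : Equiv.Perm (Fin k)} :
    Avoids (revComp σ) (revComp τ) ↔ Avoids σ τ := by
  refine not_congr ⟨fun h => ?_, Contains.revComp⟩
  simpa only [revComp_revComp] using h.revComp

/-- A fixed point lies under as many upper arcs as lower arcs. -/
theorem card_upper_eq_card_lower (σ : Equiv.Perm (Fin n)) {x : Fin n} (hx : σ x = x) :
    #{i | i < x ∧ x < σ i} = #{j | x < j ∧ σ j < x} := by
  have hcard : #{i | i < x} = #{i | σ i < x} :=
    (Finset.card_equiv σ (by simp)).symm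
  have hne : ∀ i, i ≠ x → σ i ≠ x := fun i hi h => hi (σ.injective (h.trans hx.symm))
  have := Finset.card_sdiff_comm hcard
  convert this using 2
  · ext i
    have := hne i
    simp only [mem_filter, mem_univ, true_and, mem_sdiff]
    grind
  · ext i
    have := hne i
    simp only [mem_filter, mem_univ, true_and, mem_sdiff]
    grind

theorem card_upper_fixed_eq_card_lower_fixed (σ : Equiv.Perm (Fin n)) :
    #{q : Fin n × Fin n | q.1 < q.2 ∧ σ q.2 = q.2 ∧ q.2 < σ q.1} =
      #{q : Fin n × Fin n | q.1 < q.2 ∧ σ q.1 = q.1 ∧ σ q.2 < q.1} := by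
  rw [Finset.card_filter, Finset.card_filter, Fintype.sum_prod_type_right, Fintype.sum_prod_type]
  refine Finset.sum_congr rfl fun x _ => ?_
  by_cases hx : σ x = x
  · simpa [hx] using card_upper_eq_card_lower σ hx
  · simp [hx]

/-- Nestings, split into those without a fixed point and those with one. -/
theorem nes_eq_add (σ : Equiv.Perm (Fin n)) :
    nes σ = #{q : Fin n × Fin n | q.1 < q.2 ∧ σ q.2 < σ q.1 ∧ (q.2 < σ q.2 ∨ σ q.1 < q.1)} +
      #{q : Fin n × Fin n | q.1 < q.2 ∧ σ q.1 = q.1 ∧ σ q.2 < q.1} := by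
  rw [← Finset.card_union_of_disjoint]
  · unfold nes
    congr 1
    ext q
    simp only [mem_filter, mem_univ, true_and, mem_union]
    grind
  · rw [Finset.disjoint_left]
    simp only [mem_filter, mem_univ, true_and]
    grind

theorem nes_revComp (σ : Equiv.Perm (Fin n)) : nes (revComp σ) = nes σ := by
  let e : Fin n × Fin n ≃ Fin n × Fin n :=
    (Equiv.prodComm _ _).trans (Fin.revPerm.prodCongr Fin.revPerm)
  rw [nes_eq_add, nes_eq_add, ← card_upper_fixed_eq_card_lower_fixed σ]
  congr 1
  · refine Finset.card_equiv e fun q => ?_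
    simp [e, revComp_apply, Fin.rev_lt_iff, Fin.lt_rev_iff, or_comm]
  · refine Finset.card_equiv e fun q => ?_
    simp [e, revComp_apply, Fin.rev_lt_iff, Fin.lt_rev_iff, Fin.rev_eq_iff]

theorem nesDist_revComp (n : ℕ) {k : ℕ} (τ : Equiv.Perm (Fin k)) :
    nesDist n (revComp τ) = nesDist n τ := by
  classical
  unfold nesDist
  have hmap : (univ.filter fun σ : Equiv.Perm (Fin n) => Avoids σ (revComp τ)) =
      (univ.filter fun σ => Avoids σ τ).map revComp.toEmbedding := by
    ext σ
    simp only [mem_filter, mem_univ, true_and, mem_map_equiv]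
    rw [← avoids_revComp_iff (τ := τ), Equiv.apply_symm_apply]
  rw [hmap, Finset.map_val, Multiset.map_map]
  exact Multiset.map_congr rfl fun σ _ => nes_revComp σ

end ReverseComplement

section NonNesting

theorem contains_three_iff {n : ℕ} {σ : Equiv.Perm (Fin n)} {τ : Equiv.Perm (Fin 3)} :
    Contains σ τ ↔ ∃ i j k : Fin n, i < j ∧ j < k ∧
      ∀ a b : Fin 3, σ (![i, j, k] a) < σ (![i, j, k] b) ↔ τ a < τ b := by
  constructor
  · rintro ⟨f, hf, h⟩
    refine ⟨f 0, f 1, f 2, hf (by decide), hf (by decide), ?_⟩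
    have : ![f 0, f 1, f 2] = f := by ext a; fin_cases a <;> rfl
    rwa [this]
  · rintro ⟨i, j, k, hij, hjk, h⟩
    refine ⟨![i, j, k], ?_, h⟩
    rw [Fin.strictMono_iff_lt_succ]
    intro a
    fin_cases a
    · exact hij
    · exact hjk

theorem count_zero_nesDist (n : ℕ) (τ : Equiv.Perm (Fin 3)) :
    (nesDist n τ).count 0 = #{σ : Equiv.Perm (Fin n) | nes σ = 0 ∧
      ¬ ∃ i j k : Fin n, i < j ∧ j < k ∧
        ∀ a b : Fin 3, σ (![i, j, k] a) < σ (![i, j, k] b) ↔ τ a < τ b} := by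
  classical
  rw [nesDist, Multiset.count_map, ← Finset.filter_val, Finset.card_val, Finset.filter_filter]
  congr 1
  ext σ
  simp only [mem_filter, mem_univ, true_and, Avoids, contains_three_iff, eq_comm (a := 0), and_comm]

/-- Among the patterns of length 3, both 123 and 321 are determined by the number of
non-nesting permutations of size 4 that avoid them. -/
theorem count_zero_nesDist_four_ne {τ : Equiv.Perm (Fin 3)} (hτ : τ = p123 ∨ τ = p321)
    (τ' : Equiv.Perm (Fin 3)) (hne : τ' ≠ τ) :
    (nesDist 4 τ).count 0 ≠ (nesDist 4 τ').count 0 := by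
  rw [count_zero_nesDist, count_zero_nesDist]
  revert τ τ'
  decide +kernel

end NonNesting

/-- `nes` is equidistributed over `S_n(132)` and `S_n(213)`, and over `S_n(231)` and
`S_n(312)`, for every `n`; and the patterns 123 and 321 form singleton `nes`-Wilf
classes among the patterns of length 3. -/
theorem nes_wilf_classes :
    (∀ n : ℕ, nesDist n p132 = nesDist n p213 ∧ nesDist n p231 = nesDist n p312) ∧
    (∀ τ ∈ ({p123, p321} : Set (Equiv.Perm (Fin 3))),
      ∀ τ' : Equiv.Perm (Fin 3), τ' ≠ τ → ∃ n : ℕ, nesDist n τ ≠ nesDist n τ') := by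
  have h213 : p213 = revComp p132 := by decide
  have h312 : p312 = revComp p231 := by decide
  refine ⟨fun n => ?_, fun τ hτ τ' hne => ⟨4, fun h => ?_⟩⟩
  · rw [h213, h312, nesDist_revComp, nesDist_revComp]
    exact ⟨rfl, rfl⟩
  · exact count_zero_nesDist_four_ne hτ τ' hne (congrArg (Multiset.count 0) h)
end

section
/- For every n ≥ 0, the joint distribution of the pair of statistics (crs, nes) over S_n(132) equals that over S_n(213): the multisets {(crs(σ), nes(σ)) : σ ∈ S_n(132)} and {(crs(σ), nes(σ)) : σ ∈ S_n(213)} are equal. -/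
open Equiv Finset

/-- The reverse-complement of the inverse of a permutation. -/
def revCompInv {n : ℕ} (σ : Equiv.Perm (Fin n)) : Equiv.Perm (Fin n) :=
  Fin.revPerm * σ⁻¹ * Fin.revPerm

lemma revCompInv_apply {n : ℕ} (σ : Equiv.Perm (Fin n)) (i : Fin n) :
    revCompInv σ i = (σ.symm i.rev).rev := rfl

lemma revCompInv_rev_apply {n : ℕ} (σ : Equiv.Perm (Fin n)) (i : Fin n) :
    revCompInv σ (σ i).rev = i.rev := by
  simp [revCompInv_apply]

lemma revCompInv_involutive {n : ℕ} :
    Function.Involutive (revCompInv : Equiv.Perm (Fin n) → Equiv.Perm (Fin n)) := by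
  intro σ
  ext i
  have h : (revCompInv σ).symm i.rev = (σ i).rev := by
    rw [Equiv.symm_apply_eq, revCompInv_rev_apply]
  rw [revCompInv_apply, h, Fin.rev_rev]

lemma Contains.revCompInv {n k : ℕ} {σ : Equiv.Perm (Fin n)} {τ : Equiv.Perm (Fin k)}
    (h : Contains σ τ) : Contains (revCompInv σ) (revCompInv τ) := by
  obtain ⟨f, hf, hστ⟩ := h
  refine ⟨fun a => (σ (f (τ.symm a.rev))).rev, fun a b hab => ?_, fun a b => ?_⟩
  · rw [Fin.rev_lt_rev, hστ]
    simpa using hab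
  · simp [revCompInv_apply, hf.lt_iff_lt]

lemma contains_revCompInv_iff {n k : ℕ} {σ : Equiv.Perm (Fin n)} {τ : Equiv.Perm (Fin k)} :
    Contains (revCompInv σ) (revCompInv τ) ↔ Contains σ τ :=
  ⟨fun h => by simpa only [revCompInv_involutive _] using h.revCompInv, Contains.revCompInv⟩

lemma revCompInv_p132 : revCompInv p132 = p213 := by decide

lemma avoids_p213_revCompInv_iff {n : ℕ} {σ : Equiv.Perm (Fin n)} :
    Avoids (revCompInv σ) p213 ↔ Avoids σ p132 := by
  rw [Avoids, Avoids, ← revCompInv_p132, contains_revCompInv_iff]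

lemma crs_revCompInv {n : ℕ} (σ : Equiv.Perm (Fin n)) : crs (revCompInv σ) = crs σ := by
  symm
  refine Finset.card_equiv ((Equiv.prodComm _ _).trans
    ((σ.trans Fin.revPerm).prodCongr (σ.trans Fin.revPerm))) fun q => ?_
  simp only [Finset.mem_filter, Finset.mem_univ, true_and, Equiv.trans_apply,
    Equiv.prodComm_apply, Equiv.prodCongr_apply, Prod.map, Prod.fst_swap, Prod.snd_swap,
    Fin.revPerm_apply, revCompInv_rev_apply, Fin.val_rev]
  omega

lemma nes_revCompInv {n : ℕ} (σ : Equiv.Perm (Fin n)) : nes (revCompInv σ) = nes σ := by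
  symm
  refine Finset.card_equiv
    ((σ.trans Fin.revPerm).prodCongr (σ.trans Fin.revPerm)) fun q => ?_
  simp only [Finset.mem_filter, Finset.mem_univ, true_and, Equiv.trans_apply,
    Equiv.prodCongr_apply, Prod.map,
    Fin.revPerm_apply, revCompInv_rev_apply, Fin.val_rev]
  omega

open scoped Classical in
/-- The joint distribution of `(crs, nes)` over `S_n(132)` equals that over `S_n(213)`. -/
theorem crs_nes_joint_132_213 (n : ℕ) :
    ((Finset.univ.filter (fun σ : Equiv.Perm (Fin n) => Avoids σ p132)).val.map
        (fun σ => (crs σ, nes σ)))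
      = ((Finset.univ.filter (fun σ : Equiv.Perm (Fin n) => Avoids σ p213)).val.map
        (fun σ => (crs σ, nes σ))) := by
  have h : Finset.univ.filter (fun σ : Equiv.Perm (Fin n) => Avoids σ p213) =
      (Finset.univ.filter (fun σ : Equiv.Perm (Fin n) => Avoids σ p132)).map
        (revCompInv_involutive.toPerm _).toEmbedding := by
    ext σ
    rw [Finset.mem_map_equiv]
    simp [← avoids_p213_revCompInv_iff, revCompInv_involutive σ]
  rw [h, Finset.map_val, Multiset.map_map]
  simp [Function.comp_def, crs_revCompInv, nes_revCompInv]
end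

section
/- For every n ≥ 0, the joint distribution of the triple of statistics (fp, inv, nes) over S_n(231) equals that over S_n(312): the multisets {(fp(σ), inv(σ), nes(σ)) : σ ∈ S_n(231)} and {(fp(σ), inv(σ), nes(σ)) : σ ∈ S_n(312)} are equal. -/
open Equiv Finset

theorem Contains.inv {n k : ℕ} {σ : Equiv.Perm (Fin n)} {τ : Equiv.Perm (Fin k)}
    (h : Contains σ τ) : Contains σ⁻¹ τ⁻¹ := by
  obtain ⟨f, hf, hτ⟩ := h
  refine ⟨fun a => σ (f (τ⁻¹ a)), fun a b hab => ?_, fun a b => ?_⟩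
  · simpa [hτ] using hab
  · simp [hf.lt_iff_lt]

theorem avoids_inv_iff {n k : ℕ} {σ : Equiv.Perm (Fin n)} {τ : Equiv.Perm (Fin k)} :
    Avoids σ⁻¹ τ⁻¹ ↔ Avoids σ τ :=
  not_congr ⟨fun h => by simpa using h.inv, Contains.inv⟩

theorem p231_inv : p231⁻¹ = p312 := by decide

theorem fp_inv {n : ℕ} (σ : Equiv.Perm (Fin n)) : fp σ⁻¹ = fp σ := by
  unfold fp
  congr 1
  ext i
  simp [Equiv.symm_apply_eq, eq_comm (a := i)]

theorem invStat_inv {n : ℕ} (σ : Equiv.Perm (Fin n)) : invStat σ⁻¹ = invStat σ := by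
  unfold invStat
  refine Finset.card_nbij' (fun q => (σ⁻¹ q.2, σ⁻¹ q.1)) (fun q => (σ q.2, σ q.1)) ?_ ?_ ?_ ?_ <;>
    simp +contextual [Set.MapsTo, Set.LeftInvOn]

/-- The number of nestings `i < j < σ j < σ i` of upper arcs. -/
def upperNes {n : ℕ} (σ : Equiv.Perm (Fin n)) : ℕ :=
  (Finset.univ.filter (fun q : Fin n × Fin n =>
    q.1 < q.2 ∧ q.2 < σ q.2 ∧ σ q.2 < σ q.1)).card

/-- The number of fixed points lying strictly below a lower arc, counted with multiplicity. -/
def fixedNes {n : ℕ} (σ : Equiv.Perm (Fin n)) : ℕ :=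
  ∑ i with σ i = i, (Finset.univ.filter (fun j : Fin n => σ j < i ∧ i < j)).card

theorem upperNes_inv {n : ℕ} (σ : Equiv.Perm (Fin n)) :
    upperNes σ⁻¹ = (Finset.univ.filter (fun q : Fin n × Fin n =>
      σ q.2 < σ q.1 ∧ σ q.1 < q.1 ∧ q.1 < q.2)).card := by
  unfold upperNes
  refine Finset.card_nbij' (fun q => (σ⁻¹ q.2, σ⁻¹ q.1)) (fun q => (σ q.2, σ q.1)) ?_ ?_ ?_ ?_ <;>
    simp +contextual [Set.MapsTo, Set.LeftInvOn]

theorem fixedNes_eq_card {n : ℕ} (σ : Equiv.Perm (Fin n)) :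
    fixedNes σ = (Finset.univ.filter (fun q : Fin n × Fin n =>
      σ q.2 < q.1 ∧ σ q.1 = q.1 ∧ q.1 < q.2)).card := by
  unfold fixedNes
  rw [← Finset.card_sigma]
  refine Finset.card_nbij' (fun q => (q.1, q.2)) (fun q => ⟨q.1, q.2⟩) ?_ ?_ ?_ ?_ <;>
    simp +contextual [Set.MapsTo, Set.LeftInvOn]

theorem nes_eq {n : ℕ} (σ : Equiv.Perm (Fin n)) :
    nes σ = upperNes σ + upperNes σ⁻¹ + fixedNes σ := by
  rw [upperNes_inv, fixedNes_eq_card, upperNes, ← Finset.card_union_of_disjoint,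
    ← Finset.card_union_of_disjoint, nes]
  · congr 1
    ext q
    simp only [Finset.mem_filter, Finset.mem_univ, true_and, Finset.mem_union, Fin.lt_def,
      Fin.ext_iff]
    omega
  all_goals
    rw [Finset.disjoint_left]
    intro q
    simp only [Finset.mem_filter, Finset.mem_univ, true_and, Finset.mem_union, Fin.lt_def,
      Fin.ext_iff]
    omega

/-- As many lower arcs as upper arcs pass over a fixed point. -/
theorem card_arcs_over_fixed {n : ℕ} (σ : Equiv.Perm (Fin n)) {i : Fin n} (hi : σ i = i) :
    (Finset.univ.filter (fun j : Fin n => σ j < i ∧ i < j)).card =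
      (Finset.univ.filter (fun j : Fin n => j < i ∧ i < σ j)).card := by
  have hne (j : Fin n) : σ j = i ↔ j = i := by rw [← hi, σ.injective.eq_iff, hi]
  have hcard : (Finset.univ.filter (fun j : Fin n => σ j < i)).card =
      (Finset.univ.filter (fun j : Fin n => j < i)).card :=
    Finset.card_nbij' σ σ.symm (by simp [Set.MapsTo]) (by simp [Set.MapsTo])
      (by simp [Set.LeftInvOn]) (by simp [Set.LeftInvOn, Set.RightInvOn])
  convert Finset.card_sdiff_comm hcard using 2 <;>
  · ext j
    have := hne j
    simp only [Finset.mem_filter, Finset.mem_univ, true_and, Finset.mem_sdiff, Fin.lt_def,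
      Fin.ext_iff] at this ⊢
    omega

theorem fixedNes_inv {n : ℕ} (σ : Equiv.Perm (Fin n)) : fixedNes σ⁻¹ = fixedNes σ := by
  unfold fixedNes
  refine Finset.sum_congr (by ext i; simp [Equiv.symm_apply_eq, eq_comm (a := i)]) fun i hi => ?_
  rw [card_arcs_over_fixed σ (by simpa using hi)]
  exact Finset.card_nbij' σ.symm σ (by simp [Set.MapsTo]) (by simp +contextual [Set.MapsTo])
    (by simp [Set.LeftInvOn]) (by simp [Set.LeftInvOn, Set.RightInvOn])

theorem nes_inv {n : ℕ} (σ : Equiv.Perm (Fin n)) : nes σ⁻¹ = nes σ := by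
  rw [nes_eq, nes_eq, fixedNes_inv, inv_inv, Nat.add_comm (upperNes σ⁻¹)]

open scoped Classical in
/-- The joint distribution of `(fp, inv, nes)` over `S_n(231)` equals that over `S_n(312)`. -/
theorem fp_inv_nes_joint_231_312 (n : ℕ) :
    ((Finset.univ.filter (fun σ : Equiv.Perm (Fin n) => Avoids σ p231)).val.map
        (fun σ => (fp σ, invStat σ, nes σ)))
      = ((Finset.univ.filter (fun σ : Equiv.Perm (Fin n) => Avoids σ p312)).val.map
        (fun σ => (fp σ, invStat σ, nes σ))) := by
  have h : (Finset.univ.filter (fun σ : Equiv.Perm (Fin n) => Avoids σ p312)) =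
      (Finset.univ.filter (fun σ : Equiv.Perm (Fin n) => Avoids σ p231)).map
        (Equiv.inv (Equiv.Perm (Fin n))).toEmbedding := by
    ext σ
    rw [Finset.mem_map_equiv, Finset.mem_filter_univ, Finset.mem_filter_univ, ← p231_inv,
      ← avoids_inv_iff (τ := p231)]
    simp
  rw [h, Finset.map_val, Multiset.map_map]
  simp [Function.comp_def, fp_inv, invStat_inv, nes_inv]
end

section
/- The reverse-complement map preserves the number of nestings: for every permutation σ of [n], nes(rc(σ)) = nes(σ). -/
open Equiv Finset

/-- The reverse-complement of a permutation: `rc σ (i) = n+1-σ(n+1-i)`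
(in 0-indexed form, `rc σ (i) = rev (σ (rev i))`). -/
def rc {n : ℕ} (σ : Equiv.Perm (Fin n)) : Equiv.Perm (Fin n) :=
  (Fin.revPerm.trans σ).trans Fin.revPerm

/-- Around a fixed point `k`, as many arcs jump over `k` from left to right as from right to left. -/
theorem card_jump_over_fixed {n : ℕ} (σ : Equiv.Perm (Fin n)) {k : Fin n} (hk : σ k = k) :
    (Finset.univ.filter fun i => i < k ∧ k < σ i).card =
      (Finset.univ.filter fun j => k < j ∧ σ j < k).card := by
  have hcard : (Finset.univ.filter fun i => i < k).card =
      (Finset.univ.filter fun i => σ i < k).card :=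
    (Finset.card_equiv σ (by simp)).symm
  have hne : ∀ i, σ i = k ↔ i = k := fun i => by
    rw [← σ.injective.eq_iff (a := i), hk]
  convert Finset.card_sdiff_comm hcard using 2 <;> ext i <;> have := hne i <;>
    simp only [Finset.mem_filter, Finset.mem_sdiff, Finset.mem_univ, true_and] <;> grind

/-- Upper nestings `i < j < σ j < σ i`. -/
def upperNestings {n : ℕ} (σ : Equiv.Perm (Fin n)) : Finset (Fin n × Fin n) :=
  Finset.univ.filter fun q => q.1 < q.2 ∧ q.2 < σ q.2 ∧ σ q.2 < σ q.1

/-- Strict lower nestings `σ j < σ i < i < j`. -/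
def lowerNestings {n : ℕ} (σ : Equiv.Perm (Fin n)) : Finset (Fin n × Fin n) :=
  Finset.univ.filter fun q => σ q.2 < σ q.1 ∧ σ q.1 < q.1 ∧ q.1 < q.2

/-- Pairs `(i, j)` such that `i` is a fixed point with `σ j < i < j`. -/
def fixedNestings {n : ℕ} (σ : Equiv.Perm (Fin n)) : Finset (Fin n × Fin n) :=
  Finset.univ.filter fun q => σ q.1 = q.1 ∧ q.1 < q.2 ∧ σ q.2 < q.1

theorem nes_eq_add_s6 {n : ℕ} (σ : Equiv.Perm (Fin n)) :
    nes σ = (upperNestings σ).card + (lowerNestings σ).card + (fixedNestings σ).card := by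
  rw [← Finset.card_union_of_disjoint, ← Finset.card_union_of_disjoint, nes]
  · congr 1
    ext q
    simp only [upperNestings, lowerNestings, fixedNestings, Finset.mem_filter, Finset.mem_union,
      Finset.mem_univ, true_and]
    grind
  · simp only [Finset.disjoint_left, upperNestings, lowerNestings, fixedNestings,
      Finset.mem_filter, Finset.mem_union, Finset.mem_univ, true_and]
    grind
  · simp only [Finset.disjoint_left, upperNestings, lowerNestings, Finset.mem_filter,
      Finset.mem_univ, true_and]
    grind

theorem rc_apply {n : ℕ} (σ : Equiv.Perm (Fin n)) (i : Fin n) :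
    rc σ i = (σ i.rev).rev := rfl

theorem rc_rc {n : ℕ} (σ : Equiv.Perm (Fin n)) : rc (rc σ) = σ := by
  ext i
  simp [rc_apply]

theorem card_upperNestings_rc {n : ℕ} (σ : Equiv.Perm (Fin n)) :
    (upperNestings (rc σ)).card = (lowerNestings σ).card := by
  refine Finset.card_equiv
    ((Equiv.prodComm _ _).trans (Equiv.prodCongr Fin.revPerm Fin.revPerm)) fun q => ?_
  simp only [upperNestings, lowerNestings, rc_apply, Finset.mem_filter, Finset.mem_univ, true_and,
    Equiv.trans_apply, Equiv.prodComm_apply, Equiv.prodCongr_apply, Prod.map, Prod.fst_swap,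
    Prod.snd_swap, Fin.revPerm_apply, Fin.lt_def, Fin.val_rev]
  grind

theorem card_fixedNestings {n : ℕ} (σ : Equiv.Perm (Fin n)) :
    (fixedNestings σ).card =
      ∑ k with σ k = k, (Finset.univ.filter fun j => k < j ∧ σ j < k).card := by
  rw [← Finset.card_sigma]
  refine Finset.card_equiv (Equiv.sigmaEquivProd _ _).symm fun q => ?_
  simp [fixedNestings]

theorem card_fixedNestings_rc {n : ℕ} (σ : Equiv.Perm (Fin n)) :
    (fixedNestings (rc σ)).card = (fixedNestings σ).card := by
  rw [card_fixedNestings, card_fixedNestings]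
  refine Finset.sum_equiv Fin.revPerm (by simp [rc_apply, Fin.rev_eq_iff]) fun k hk => ?_
  have hk : σ k.rev = k.rev := by simpa [rc_apply, Fin.rev_eq_iff] using hk
  rw [Fin.revPerm_apply, ← card_jump_over_fixed σ hk]
  refine Finset.card_equiv Fin.revPerm fun j => ?_
  simp [rc_apply, Fin.rev_lt_iff, Fin.lt_rev_iff]

/-- The reverse-complement map preserves the number of nestings. -/
theorem nes_rc {n : ℕ} (σ : Equiv.Perm (Fin n)) : nes (rc σ) = nes σ := by
  have hlower : (lowerNestings (rc σ)).card = (upperNestings σ).card := by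
    rw [← card_upperNestings_rc, rc_rc]
  rw [nes_eq_add_s6, nes_eq_add_s6, card_upperNestings_rc, hlower, card_fixedNestings_rc]
  ring
end

section
/- The reverse-complement-inverse map preserves both the number of crossings and the number of nestings: for every permutation σ of [n], crs(rci(σ)) = crs(σ) and nes(rci(σ)) = nes(σ). -/
open Equiv Finset

/-- The reverse-complement-inverse of a permutation:
`rci σ (j) = n+1-σ⁻¹(n+1-j)` (in 0-indexed form, `rci σ (j) = rev (σ⁻¹ (rev j))`). -/
def rci {n : ℕ} (σ : Equiv.Perm (Fin n)) : Equiv.Perm (Fin n) :=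
  (Fin.revPerm.trans σ⁻¹).trans Fin.revPerm

/-- `rci σ` sends the complement of `σ i` to the complement of `i`. -/
theorem rci_rev_apply {n : ℕ} (σ : Equiv.Perm (Fin n)) (i : Fin n) :
    rci σ (Fin.rev (σ i)) = Fin.rev i := by
  simp [rci]

/-- Each arc `i → σ i` becomes the arc `rev (σ i) → rev i`; a crossing of arcs stays a crossing,
with the order of the two arcs exchanged. -/
theorem crs_rci {n : ℕ} (σ : Equiv.Perm (Fin n)) : crs (rci σ) = crs σ := by
  let e : Equiv.Perm (Fin n) := σ.trans Fin.revPerm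
  have he : ∀ i, e i = Fin.rev (σ i) := fun _ => rfl
  symm
  refine Finset.card_equiv ((Equiv.prodComm _ _).trans (e.prodCongr e)) ?_
  rintro ⟨i, j⟩
  simp only [Finset.mem_filter, Finset.mem_univ, true_and, Equiv.trans_apply,
    Equiv.prodComm_apply, Prod.swap_prod_mk, Equiv.prodCongr_apply, Prod.map_apply, he,
    rci_rev_apply, Fin.val_rev]
  omega

/-- Each arc `i → σ i` becomes the arc `rev (σ i) → rev i`; a nesting of arcs stays a nesting,
with the order of the two arcs kept. -/
theorem nes_rci {n : ℕ} (σ : Equiv.Perm (Fin n)) : nes (rci σ) = nes σ := by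
  let e : Equiv.Perm (Fin n) := σ.trans Fin.revPerm
  have he : ∀ i, e i = Fin.rev (σ i) := fun _ => rfl
  symm
  refine Finset.card_equiv (e.prodCongr e) ?_
  rintro ⟨i, j⟩
  simp only [Finset.mem_filter, Finset.mem_univ, true_and, Equiv.prodCongr_apply,
    Prod.map_apply, he, rci_rev_apply, Fin.val_rev]
  omega

/-- The reverse-complement-inverse map preserves the numbers of crossings and nestings. -/
theorem crs_nes_rci {n : ℕ} (σ : Equiv.Perm (Fin n)) :
    crs (rci σ) = crs σ ∧ nes (rci σ) = nes σ :=
  ⟨crs_rci σ, nes_rci σ⟩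
end

section
/- For any set T of permutation patterns and every n ≥ 0, the joint distribution of (crs, nes) over S_n(T) equals that over S_n(rci(T)): the multisets {(crs(σ), nes(σ)) : σ ∈ S_n(T)} and {(crs(σ), nes(σ)) : σ ∈ S_n(rci(T))} are equal, where rci(T) = {rci(τ) : τ ∈ T}. -/
open Equiv Finset

@[simp]
theorem rci_apply {n : ℕ} (σ : Equiv.Perm (Fin n)) (j : Fin n) :
    rci σ j = (σ⁻¹ j.rev).rev := rfl

@[simp]
theorem rci_rci {n : ℕ} (σ : Equiv.Perm (Fin n)) : rci (rci σ) = σ := by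
  ext1 j
  rw [rci_apply, Fin.rev_eq_iff, Equiv.Perm.inv_eq_iff_eq]
  simp

/-- `rci` as an involutive bijection of the permutations of `Fin n`. -/
def rciEquiv (n : ℕ) : Equiv.Perm (Fin n) ≃ Equiv.Perm (Fin n) :=
  (show Function.Involutive (rci (n := n)) from rci_rci).toPerm

/-- The point `(i, σ i)` of the graph of `σ` corresponds to the point of the graph of `rci σ`
with abscissa `rev (σ i)`. -/
def revImage {n : ℕ} (σ : Equiv.Perm (Fin n)) : Fin n ≃ Fin n := σ.trans Fin.revPerm

@[simp]
theorem revImage_apply {n : ℕ} (σ : Equiv.Perm (Fin n)) (i : Fin n) :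
    revImage σ i = (σ i).rev := rfl

theorem Contains.rci {n k : ℕ} {σ : Equiv.Perm (Fin n)} {τ : Equiv.Perm (Fin k)}
    (h : Contains σ τ) : Contains (rci σ) (rci τ) := by
  obtain ⟨f, hf, hστ⟩ := h
  refine ⟨fun a => (σ (f (τ⁻¹ a.rev))).rev, fun a b hab => ?_, fun a b => ?_⟩
  · simpa [hστ] using hab
  · simp [hf.lt_iff_lt]

theorem contains_rci_iff {n k : ℕ} {σ : Equiv.Perm (Fin n)} {τ : Equiv.Perm (Fin k)} :
    Contains (rci σ) (rci τ) ↔ Contains σ τ :=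
  ⟨fun h => by simpa using h.rci, Contains.rci⟩

open scoped Classical in
/-- For any set `T` of patterns (of arbitrary lengths) and every `n`, the joint
distribution of `(crs, nes)` over `S_n(T)` equals that over `S_n(rci(T))`. -/
theorem crs_nes_equidistributed_avoid_rci (T : Set (Σ k : ℕ, Equiv.Perm (Fin k))) (n : ℕ) :
    ((Finset.univ.filter (fun σ : Equiv.Perm (Fin n) => ∀ τ ∈ T, Avoids σ τ.2)).val.map
        (fun σ => (crs σ, nes σ)))
      = ((Finset.univ.filter (fun σ : Equiv.Perm (Fin n) =>
          ∀ τ ∈ (fun τ : Σ k : ℕ, Equiv.Perm (Fin k) => (⟨τ.1, rci τ.2⟩ : Σ k : ℕ, Equiv.Perm (Fin k))) '' T,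
            Avoids σ τ.2)).val.map (fun σ => (crs σ, nes σ))) := by
  have himage : Finset.univ.filter (fun σ : Equiv.Perm (Fin n) =>
      ∀ τ ∈ (fun τ : Σ k : ℕ, Equiv.Perm (Fin k) =>
        (⟨τ.1, rci τ.2⟩ : Σ k : ℕ, Equiv.Perm (Fin k))) '' T, Avoids σ τ.2)
      = (Finset.univ.filter (fun σ : Equiv.Perm (Fin n) => ∀ τ ∈ T, Avoids σ τ.2)).map
        (rciEquiv n).toEmbedding := by
    ext σ
    rw [Finset.mem_map_equiv, Finset.mem_filter_univ, Finset.mem_filter_univ,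
      Set.forall_mem_image]
    refine forall₂_congr fun τ _ => not_congr ?_
    change Contains σ (rci τ.2) ↔ Contains (rci σ) τ.2
    rw [← contains_rci_iff, rci_rci]
  rw [himage, Finset.map_val, Multiset.map_map]
  refine Multiset.map_congr rfl fun σ _ => ?_
  change (crs σ, nes σ) = (crs (rci σ), nes (rci σ))
  rw [crs_rci, nes_rci]
end

section
/- A permutation σ of [n] is nonnesting if and only if it avoids the pattern 321: nes(σ) = 0 ⟺ σ ∈ S_n(321). Equivalently, the set of nonnesting permutations of [n] equals S_n(321). -/
open Equiv Finset

/-- A permutation contains 321 iff it has a decreasing subsequence of length three. -/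
lemma contains_p321_iff {n : ℕ} (σ : Equiv.Perm (Fin n)) :
    Contains σ p321 ↔ ∃ i j k : Fin n, i < j ∧ j < k ∧ σ j < σ i ∧ σ k < σ j := by
  constructor
  · rintro ⟨f, hf, h⟩
    exact ⟨f 0, f 1, f 2, hf (by decide), hf (by decide), (h 1 0).2 (by decide),
      (h 2 1).2 (by decide)⟩
  · rintro ⟨i, j, k, hij, hjk, hji, hkj⟩
    have hp : p321 0 = 2 ∧ p321 1 = 1 ∧ p321 2 = 0 := by decide
    obtain ⟨h0, h1, h2⟩ := hp
    refine ⟨![i, j, k], ?_, ?_⟩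
    · intro a b hab
      fin_cases a <;> fin_cases b <;> simp at hab ⊢ <;> order
    · intro a b
      fin_cases a <;> fin_cases b <;> simp [h0, h1, h2] <;> order

/-- The nonnesting condition as the absence of a nesting pair. -/
lemma nes_eq_zero_iff {n : ℕ} (σ : Equiv.Perm (Fin n)) :
    nes σ = 0 ↔ ∀ i j : Fin n, ¬ ((i < j ∧ j < σ j ∧ σ j < σ i) ∨
      (σ j < σ i ∧ σ i ≤ i ∧ i < j)) := by
  simp [nes, Finset.filter_eq_empty_iff]

/-- Every excedance is followed by a smaller value. -/
lemma exists_gt_of_excedance {n : ℕ} (σ : Equiv.Perm (Fin n)) {j : Fin n}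
    (hj : j < σ j) : ∃ k, j < k ∧ σ k < σ j := by
  by_contra! h
  have hsub : (Finset.Iio (σ j)).map σ.symm.toEmbedding ⊆ Finset.Iio j := by
    intro x hx
    obtain ⟨v, hv, rfl⟩ := Finset.mem_map.1 hx
    rw [Finset.mem_Iio] at hv ⊢
    rw [Equiv.coe_toEmbedding]
    by_contra! hle
    rcases hle.lt_or_eq with hlt | heq
    · simpa [hv.not_ge] using h _ hlt
    · simp [heq] at hv
  have hcard := Finset.card_le_card hsub
  simp only [Finset.card_map, Fin.card_Iio] at hcard
  omega

/-- A lower nesting extends to the left to a decreasing subsequence of length three. -/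
lemma exists_lt_of_lower_nesting {n : ℕ} (σ : Equiv.Perm (Fin n)) {i j : Fin n}
    (hji : σ j < σ i) (hi : σ i ≤ i) (hij : i < j) : ∃ k, k < i ∧ σ i < σ k := by
  by_contra! h
  have hsub : (insert j (Finset.Iio i)).map σ.toEmbedding ⊆ Finset.Iio (σ i) := by
    intro x hx
    obtain ⟨k, hk, rfl⟩ := Finset.mem_map.1 hx
    rw [Finset.mem_insert, Finset.mem_Iio] at hk
    rw [Finset.mem_Iio, Equiv.coe_toEmbedding]
    rcases hk with rfl | hk
    · exact hji
    · exact (h k hk).lt_of_ne fun he => hk.ne (σ.injective he)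
  have hcard := Finset.card_le_card hsub
  rw [Finset.card_map, Finset.card_insert_of_notMem (by simpa using hij.le), Fin.card_Iio,
    Fin.card_Iio] at hcard
  omega

lemma nes_eq_zero_iff_avoids_p321 {n : ℕ} (σ : Equiv.Perm (Fin n)) :
    nes σ = 0 ↔ Avoids σ p321 := by
  rw [nes_eq_zero_iff, Avoids, contains_p321_iff]
  constructor
  · rintro h ⟨i, j, k, hij, hjk, hji, hkj⟩
    rcases lt_or_ge j (σ j) with hj | hj
    · exact h i j (Or.inl ⟨hij, hj, hji⟩)
    · exact h j k (Or.inr ⟨hkj, hj, hjk⟩)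
  · rintro h i j (⟨hij, hj, hji⟩ | ⟨hji, hi, hij⟩)
    · obtain ⟨k, hjk, hkj⟩ := exists_gt_of_excedance σ hj
      exact h ⟨i, j, k, hij, hjk, hji, hkj⟩
    · obtain ⟨k, hki, hik⟩ := exists_lt_of_lower_nesting σ hji hi hij
      exact h ⟨k, i, j, hki, hij, hik, hji⟩

/-- A permutation is nonnesting if and only if it avoids the pattern 321;
equivalently, the set of nonnesting permutations of `[n]` equals `S_n(321)`. -/
theorem nonnesting_iff_avoids_321 (n : ℕ) :
    (∀ σ : Equiv.Perm (Fin n), nes σ = 0 ↔ Avoids σ p321) ∧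
    {σ : Equiv.Perm (Fin n) | nes σ = 0} = {σ : Equiv.Perm (Fin n) | Avoids σ p321} := by
  exact ⟨nes_eq_zero_iff_avoids_p321, Set.ext nes_eq_zero_iff_avoids_p321⟩
end
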